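/- Let L ≥ 1 and let G_ℓ ∈ ℝ^{3×3}, ℓ = 1,…,L, be symmetric positive definite matrices; set γ_ℓ(p) = (p·G_ℓ p)^{1/2}, γ(p) = Σ_{ℓ=1}^L γ_ℓ(p), A(p) = ½γ(p)², and B(q) = γ(q) Σ_{ℓ=1}^L γ_ℓ(q)^{-1} G_ℓ for q ≠ 0, B(0) = L Σ_{ℓ=1}^L G_ℓ. Then for all p, q ∈ ℝ³ one has (B(q)p) · (p − q) ≥ A(p) − A(q). -/

import Mathlib

/-!
Write `a ℓ = γ_ℓ(p)` and `b ℓ = γ_ℓ(q)`. For `q ≠ 0`, the Cauchy–Schwarz inequality for each inner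
product `G ℓ` (`dotProduct_mulVec_le_gammaEll_mul`) bounds the left-hand side below by
`γ(q) ∑ (a ℓ)² / b ℓ - γ(q) γ(p)`, and Sedrakyan's lemma `(∑ a)² / ∑ b ≤ ∑ a² / b` bounds this
below by `γ(p) (γ(p) - γ(q)) ≥ ½ (γ(p)² - γ(q)²)`. For `q = 0` the claim is
`L ∑ (a ℓ)² ≥ ½ (∑ a ℓ)²`, which is again Cauchy–Schwarz.
-/

open Matrix BigOperators

/-- The single-summand density `γ_ℓ(p) = (p ⋅ G_ℓ p)^{1/2}` of a BGN anisotropy. -/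
noncomputable def gammaEll {L : ℕ} (G : Fin L → Matrix (Fin 3) (Fin 3) ℝ)
    (ℓ : Fin L) (p : Fin 3 → ℝ) : ℝ :=
  Real.sqrt (p ⬝ᵥ (G ℓ).mulVec p)

/-- The BGN anisotropy `γ(p) = ∑_ℓ (p ⋅ G_ℓ p)^{1/2}`. -/
noncomputable def gammaBGN {L : ℕ} (G : Fin L → Matrix (Fin 3) (Fin 3) ℝ)
    (p : Fin 3 → ℝ) : ℝ :=
  ∑ ℓ, gammaEll G ℓ p

/-- The linearized BGN operator `B(q) = γ(q) ∑_ℓ γ_ℓ(q)⁻¹ G_ℓ` for `q ≠ 0`,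
with `B(0) = L ∑_ℓ G_ℓ`. -/
noncomputable def Bmat {L : ℕ} (G : Fin L → Matrix (Fin 3) (Fin 3) ℝ)
    (q : Fin 3 → ℝ) : Matrix (Fin 3) (Fin 3) ℝ :=
  if q = 0 then (L : ℝ) • ∑ ℓ, G ℓ
  else gammaBGN G q • ∑ ℓ, (gammaEll G ℓ q)⁻¹ • G ℓ

lemma gammaEll_pos {L : ℕ} {G : Fin L → Matrix (Fin 3) (Fin 3) ℝ} {ℓ : Fin L}
    (hG : (G ℓ).PosDef) {p : Fin 3 → ℝ} (hp : p ≠ 0) : 0 < gammaEll G ℓ p := by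
  have h := hG.dotProduct_mulVec_pos hp
  exact Real.sqrt_pos.mpr (by simpa using h)

lemma gammaEll_sq {L : ℕ} {G : Fin L → Matrix (Fin 3) (Fin 3) ℝ} {ℓ : Fin L}
    (hG : (G ℓ).PosDef) (p : Fin 3 → ℝ) :
    gammaEll G ℓ p ^ 2 = (G ℓ).mulVec p ⬝ᵥ p := by
  have h := hG.posSemidef.dotProduct_mulVec_nonneg p
  rw [gammaEll, Real.sq_sqrt (by simpa using h), dotProduct_comm]

/-- Cauchy–Schwarz for the inner product given by `G ℓ`. -/
lemma dotProduct_mulVec_le_gammaEll_mul {L : ℕ} {G : Fin L → Matrix (Fin 3) (Fin 3) ℝ}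
    {ℓ : Fin L} (hG : (G ℓ).PosDef) (p q : Fin 3 → ℝ) :
    (G ℓ).mulVec p ⬝ᵥ q ≤ gammaEll G ℓ p * gammaEll G ℓ q := by
  by_cases hp : p = 0
  · simp [hp, gammaEll]
  by_cases hq : q = 0
  · simp [hq, gammaEll]
  have ha := gammaEll_pos hG hp
  have hb := gammaEll_pos hG hq
  have ha2 := gammaEll_sq hG p
  have hb2 := gammaEll_sq hG q
  set a := gammaEll G ℓ p
  set b := gammaEll G ℓ q
  have hsymm : (G ℓ).mulVec q ⬝ᵥ p = (G ℓ).mulVec p ⬝ᵥ q := by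
    have hT : (G ℓ)ᵀ = G ℓ := by simpa using hG.isHermitian.eq
    rw [dotProduct_comm, dotProduct_mulVec, ← mulVec_transpose, hT]
  -- The form is nonnegative at `b p - a q`, where it equals `2ab (ab - (G p) ⋅ q)`.
  have h : 0 ≤ (G ℓ).mulVec (b • p - a • q) ⬝ᵥ (b • p - a • q) := by
    rw [← gammaEll_sq hG]
    positivity
  simp only [mulVec_sub, mulVec_smul, sub_dotProduct, dotProduct_sub, smul_dotProduct,
    dotProduct_smul, smul_eq_mul, hsymm, ← ha2, ← hb2] at h
  have h' : 0 ≤ (a * b) * (a * b - (G ℓ).mulVec p ⬝ᵥ q) := by nlinarith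
  linarith [nonneg_of_mul_nonneg_right h' (mul_pos ha hb)]

/-- **Key stability estimate** (used in the proof of Theorem 4.1): for the BGN anisotropy
`γ(p) = ∑_ℓ (p ⋅ G_ℓ p)^{1/2}` with `G_ℓ` symmetric positive definite and `A = ½γ²`,
`(B(q)p) ⋅ (p − q) ≥ A(p) − A(q)` for all `p, q ∈ ℝ³`. -/
theorem Bmat_stability (L : ℕ) (hL : 1 ≤ L)
    (G : Fin L → Matrix (Fin 3) (Fin 3) ℝ) (hG : ∀ ℓ, (G ℓ).PosDef)
    (p q : Fin 3 → ℝ) :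
    ((Bmat G q).mulVec p) ⬝ᵥ (p - q)
      ≥ (1 / 2) * (gammaBGN G p) ^ 2 - (1 / 2) * (gammaBGN G q) ^ 2 := by
  by_cases hq : q = 0
  · have hcs : gammaBGN G p ^ 2 ≤ L * ∑ ℓ, gammaEll G ℓ p ^ 2 := by
      simpa [gammaBGN] using
        sq_sum_le_card_mul_sum_sq (s := Finset.univ) (f := fun ℓ => gammaEll G ℓ p)
    have hB : (Bmat G q).mulVec p ⬝ᵥ (p - q) = L * ∑ ℓ, gammaEll G ℓ p ^ 2 := by
      simp only [Bmat, hq, if_true, sub_zero, smul_mulVec, sum_mulVec, smul_dotProduct,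
        sum_dotProduct, smul_eq_mul, gammaEll_sq (hG _)]
    rw [hB]
    nlinarith [sq_nonneg (gammaBGN G p), sq_nonneg (gammaBGN G q)]
  · have hb : ∀ ℓ, 0 < gammaEll G ℓ q := fun ℓ => gammaEll_pos (hG ℓ) hq
    have hγ : 0 < gammaBGN G q :=
      Finset.sum_pos (fun ℓ _ => hb ℓ) ⟨⟨0, hL⟩, Finset.mem_univ _⟩
    have hB : (Bmat G q).mulVec p ⬝ᵥ (p - q) = gammaBGN G q *
        ∑ ℓ, (gammaEll G ℓ q)⁻¹ * (gammaEll G ℓ p ^ 2 - (G ℓ).mulVec p ⬝ᵥ q) := by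
      simp only [Bmat, hq, if_false, smul_mulVec, sum_mulVec, smul_dotProduct,
        sum_dotProduct, smul_eq_mul, gammaEll_sq (hG _), dotProduct_sub, mul_sub,
        Finset.sum_sub_distrib]
    have hterm : ∑ ℓ, gammaEll G ℓ p ^ 2 / gammaEll G ℓ q - gammaBGN G p ≤
        ∑ ℓ, (gammaEll G ℓ q)⁻¹ * (gammaEll G ℓ p ^ 2 - (G ℓ).mulVec p ⬝ᵥ q) := by
      rw [gammaBGN, ← Finset.sum_sub_distrib]
      refine Finset.sum_le_sum fun ℓ _ => ?_
      have h := dotProduct_mulVec_le_gammaEll_mul (hG ℓ) p q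
      have hne := (hb ℓ).ne'
      calc gammaEll G ℓ p ^ 2 / gammaEll G ℓ q - gammaEll G ℓ p
          = (gammaEll G ℓ q)⁻¹ *
              (gammaEll G ℓ p ^ 2 - gammaEll G ℓ p * gammaEll G ℓ q) := by
            field_simp
        _ ≤ _ := by
            have := (inv_pos.mpr (hb ℓ)).le
            gcongr
    have hsed : gammaBGN G p ^ 2 / gammaBGN G q ≤
        ∑ ℓ, gammaEll G ℓ p ^ 2 / gammaEll G ℓ q :=
      Finset.sq_sum_div_le_sum_sq_div Finset.univ _ fun ℓ _ => hb ℓ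
    rw [hB]
    have h := mul_le_mul_of_nonneg_left
      ((sub_le_sub_right hsed (gammaBGN G p)).trans hterm) hγ.le
    have heq : gammaBGN G q * (gammaBGN G p ^ 2 / gammaBGN G q - gammaBGN G p) =
        gammaBGN G p ^ 2 - gammaBGN G p * gammaBGN G q := by
      field_simp
    nlinarith [sq_nonneg (gammaBGN G p - gammaBGN G q)]
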